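/- Fix p₀ ∈ (√2, 2) and let (q, p) be the global solution of (HS) with initial datum (q(0), p(0)) = (0, p₀). Then t ↦ q(t) is increasing on [0, +∞) and q(t) → +∞ as t → +∞. -/

import Mathlib

open Real Set Filter MeasureTheory
open scoped Topology

/-- The potential `g` from the Hamiltonian `H(x,p) = p²/2 + g(x)`. -/
noncomputable def g (x : ℝ) : ℝ := if |x| ≤ 1 then 1 - (1 - x ^ 2) ^ 4 else 1

/-- The derivative of `g`. -/
noncomputable def g' (x : ℝ) : ℝ := if |x| ≤ 1 then 8 * x * (1 - x ^ 2) ^ 3 else 0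

/-- `(q, p)` is a (global) solution of the Hamiltonian system (HS): `q̇ = p`, `ṗ = -g'(q)`. -/
def IsHSSol (q p : ℝ → ℝ) : Prop :=
  (∀ t : ℝ, HasDerivAt q (p t) t) ∧ (∀ t : ℝ, HasDerivAt p (-(g' (q t))) t)

/-- `F` is the flow of (HS): `F t q₀ p₀ = (q t, p t)` for the solution with data `(q₀, p₀)`. -/
def IsHSFlow (F : ℝ → ℝ → ℝ → ℝ × ℝ) : Prop :=
  ∀ q₀ p₀ : ℝ,
    IsHSSol (fun t => (F t q₀ p₀).1) (fun t => (F t q₀ p₀).2) ∧ F 0 q₀ p₀ = (q₀, p₀)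

/-- The set `([0,∞) × {2}) ∪ ({0} × (0,2])`, codomain of the map `Δ`. -/
def Dset : Set (ℝ × ℝ) := (Ici (0:ℝ) ×ˢ ({2} : Set ℝ)) ∪ ({(0:ℝ)} ×ˢ Ioc (0:ℝ) 2)

/-- `T` is the smallest positive period of `q`. -/
def IsSmallestPeriod (q : ℝ → ℝ) (T : ℝ) : Prop :=
  0 < T ∧ Function.Periodic q T ∧ ∀ T' : ℝ, 0 < T' → Function.Periodic q T' → T ≤ T'

/-- `T` is the period map `𝒯`, assigning to `p₀ ∈ (0, √2)` the smallest positive period of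
the `q`-component of the solution of (HS) with initial datum `(0, p₀)`. -/
def IsPeriodMap (F : ℝ → ℝ → ℝ → ℝ × ℝ) (T : ℝ → ℝ) : Prop :=
  ∀ p₀ ∈ Ioo (0:ℝ) (Real.sqrt 2), IsSmallestPeriod (fun t => (F t 0 p₀).1) (T p₀)

/-- `Δ` associates to `(t,x)` the datum in `Dset` whose orbit stays positive on `(0,t)`
and reaches `x` at time `t`. -/
def IsDeltaMap (F : ℝ → ℝ → ℝ → ℝ × ℝ) (Δ : ℝ → ℝ → ℝ × ℝ) : Prop :=
  ∀ t x : ℝ, 0 < t → 0 < x →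
    Δ t x ∈ Dset ∧ (F t (Δ t x).1 (Δ t x).2).1 = x ∧
      ∀ s ∈ Ioo (0:ℝ) t, 0 < (F s (Δ t x).1 (Δ t x).2).1

/-- The solution `u` of the conservation law built from the flow `F` and the map `Δ`
(extended by `0` at `x = 0`). -/
noncomputable def usol (F : ℝ → ℝ → ℝ → ℝ × ℝ) (Δ : ℝ → ℝ → ℝ × ℝ) (t x : ℝ) : ℝ :=
  if 0 < x then (F t (Δ t x).1 (Δ t x).2).2
  else if x < 0 then -(F t (Δ t (-x)).1 (Δ t (-x)).2).2
  else 0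

lemma aux_r (u : ℝ) : HasDerivAt (fun u : ℝ => (max u 0) ^ 4) (4 * (max u 0) ^ 3) u := by
  rcases lt_trichotomy u 0 with h | h | h
  · rw [max_eq_right h.le]
    have h1 : HasDerivAt (fun _ : ℝ => (0:ℝ)) (4 * 0 ^ 3) u := by
      simpa using hasDerivAt_const u (0:ℝ)
    refine h1.congr_of_eventuallyEq ?_
    filter_upwards [Iio_mem_nhds h] with y hy
    simp [max_eq_right (le_of_lt (mem_Iio.1 hy))]
  · subst h
    have h1 : HasDerivWithinAt (fun u : ℝ => (max u 0) ^ 4) 0 (Iic 0) 0 := by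
      refine (hasDerivWithinAt_const (0:ℝ) (Iic 0) (0:ℝ)).congr ?_ (by simp)
      intro y hy
      simp [max_eq_right (mem_Iic.1 hy)]
    have h2 : HasDerivWithinAt (fun u : ℝ => (max u 0) ^ 4) 0 (Ici 0) 0 := by
      have h3 : HasDerivWithinAt (fun u : ℝ => u ^ 4) 0 (Ici 0) 0 := by
        simpa using (hasDerivAt_pow 4 (0:ℝ)).hasDerivWithinAt
      refine h3.congr ?_ (by simp)
      intro y hy
      simp [max_eq_left (mem_Ici.1 hy)]
    have h4 := h1.union h2
    rw [Iic_union_Ici, hasDerivWithinAt_univ] at h4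
    simpa using h4
  · rw [max_eq_left h.le]
    have h1 : HasDerivAt (fun u : ℝ => u ^ 4) (4 * u ^ 3) u := by
      simpa using hasDerivAt_pow 4 u
    refine h1.congr_of_eventuallyEq ?_
    filter_upwards [Ioi_mem_nhds h] with y hy
    simp [max_eq_left (le_of_lt (mem_Ioi.1 hy))]

lemma g_eq (x : ℝ) : g x = 1 - (max (1 - x ^ 2) 0) ^ 4 := by
  unfold g
  split_ifs with h
  · rw [max_eq_left]
    have := (sq_le_one_iff_abs_le_one x).2 h
    linarith
  · rw [max_eq_right]
    · norm_num
    have := mt (sq_le_one_iff_abs_le_one x).1 h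
    linarith

lemma g'_eq (x : ℝ) : g' x = 8 * x * (max (1 - x ^ 2) 0) ^ 3 := by
  unfold g'
  split_ifs with h
  · rw [max_eq_left]
    have := (sq_le_one_iff_abs_le_one x).2 h
    linarith
  · rw [max_eq_right]
    · norm_num
    have := mt (sq_le_one_iff_abs_le_one x).1 h
    linarith

lemma g_deriv (x : ℝ) : HasDerivAt g (g' x) x := by
  have h0 : g = fun x => 1 - (max (1 - x ^ 2) 0) ^ 4 := funext g_eq
  have h1 : HasDerivAt (fun x : ℝ => 1 - x ^ 2) (-(2 * x)) x := by
    simpa using (hasDerivAt_pow 2 x).const_sub 1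
  have h2 := ((aux_r (1 - x ^ 2)).comp x h1).const_sub 1
  rw [h0, g'_eq]
  refine HasDerivAt.congr_deriv h2 ?_
  ring

lemma g_le (x : ℝ) : g x ≤ 1 := by
  rw [g_eq]
  have : 0 ≤ (max (1 - x ^ 2) 0) ^ 4 := by positivity
  linarith

/-- Lemma ce3 (i): for `p₀ ∈ (√2, 2)`, the solution of (HS) with datum `(0, p₀)` has `q`
increasing on `[0, ∞)` and `q(t) → +∞` as `t → +∞`. -/
theorem stmt_3 (p₀ : ℝ) (hp₀ : p₀ ∈ Ioo (Real.sqrt 2) 2) (q p : ℝ → ℝ)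
    (hsol : IsHSSol q p) (hq0 : q 0 = 0) (hp0 : p 0 = p₀) :
    StrictMonoOn q (Ici 0) ∧ Tendsto q atTop atTop := by
  obtain ⟨hq, hp⟩ := hsol
  obtain ⟨h1, -⟩ := hp₀
  have hs : 0 ≤ Real.sqrt 2 := Real.sqrt_nonneg 2
  have hs2 : Real.sqrt 2 ^ 2 = 2 := Real.sq_sqrt (by norm_num)
  have hpp : 0 < p₀ := by linarith
  have hc : 0 < p₀ ^ 2 - 2 := by nlinarith
  have hE : ∀ t, HasDerivAt (fun t => p t ^ 2 / 2 + g (q t)) 0 t := by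
    intro t
    have h2 := (((hp t).pow 2).div_const 2).add ((g_deriv (q t)).comp t (hq t))
    refine HasDerivAt.congr_deriv h2 ?_
    norm_num
    ring
  have hconst : ∀ t, p t ^ 2 / 2 + g (q t) = p₀ ^ 2 / 2 := by
    intro t
    have h2 := is_const_of_deriv_eq_zero (fun t => (hE t).differentiableAt)
      (fun t => (hE t).deriv) t 0
    simp only [hp0, hq0] at h2
    rw [h2]
    simp [g]
  have hlow : ∀ t, p₀ ^ 2 - 2 ≤ p t ^ 2 := by
    intro t
    have := hconst t
    have := g_le (q t)
    linarith
  have hpc : Continuous p := continuous_iff_continuousAt.2 fun t => (hp t).continuousAt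
  have hpos : ∀ t, 0 < p t := by
    intro t
    by_contra hneg
    push Not at hneg
    obtain ⟨s, hs⟩ := mem_range_of_exists_le_of_exists_ge hpc ⟨t, hneg⟩ ⟨0, by rw [hp0]; exact hpp.le⟩
    have := hlow s
    rw [hs] at this
    linarith
  have hmono : StrictMono q := strictMono_of_hasDerivAt_pos hq hpos
  refine ⟨hmono.strictMonoOn _, ?_⟩
  set c := Real.sqrt (p₀ ^ 2 - 2) with hcdef
  have hcpos : 0 < c := Real.sqrt_pos.2 hc
  have hpge : ∀ t, c ≤ p t := fun t => Real.sqrt_le_iff.2 ⟨(hpos t).le, hlow t⟩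
  have hm : Monotone (fun t => q t - c * t) := by
    have hd : ∀ t, HasDerivAt (fun t => q t - c * t) (p t - c) t := by
      intro t
      refine HasDerivAt.congr_deriv ((hq t).sub ((hasDerivAt_id t).const_mul c)) ?_
      ring
    refine monotone_of_deriv_nonneg (fun t => (hd t).differentiableAt) fun t => ?_
    rw [(hd t).deriv]
    linarith [hpge t]
  refine tendsto_atTop_mono' atTop ?_ (tendsto_id.const_mul_atTop hcpos)
  filter_upwards [eventually_ge_atTop 0] with t ht
  have := hm ht
  simp only [hq0] at this
  simp only [id]
  linarith
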